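/- For every complex number s with Im s > 0, the integral of z·tan(πz) along the straight line segment from 0 to s, namely ∫₀¹ s²·u·tan(πsu) du, equals i s²/2 − (s/π)·Log(1 + e^{2πis}) + (i/(2π²))·Li₂(−e^{2πis}) + i/24. -/

import Mathlib

open Complex Real

/-- The dilogarithm, defined by its power series `∑ wⁿ/n²` (convergent for `|w| < 1`). -/
noncomputable def dilog (w : ℂ) : ℂ := ∑' n : ℕ, w ^ (n + 1) / ((n : ℂ) + 1) ^ 2

/-!
With `q = exp (2πiz)` one has `tan (πz) = i (1 - q) / (1 + q)`, and `Li₂' w = -Log (1 - w) / w`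
makes `d/dz Li₂ (-q) = -2πi Log (1 + q)`. Integrating `z tan (πz)` by parts therefore gives
`i z² / 2 - (z / π) Log (1 + q)` plus a multiple of `Li₂ (-q)`. The derivative is available only
on the open upper half-plane, where `|q| < 1`; the primitive is still continuous at the endpoint
`z = 0`, where `q = 1` lies on the circle of convergence, and this suffices for the fundamental
theorem of calculus. There `Li₂ (-1) = -π² / 12` produces the constant `i / 24`.
-/

theorem integral_comp_lineMap_eq_sub_of_hasDerivAt {𝕜 E : Type*} [RCLike 𝕜]
    [NormedAddCommGroup E] [NormedSpace ℝ E] [CompleteSpace E] [NormedSpace 𝕜 E]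
    [IsScalarTower ℝ 𝕜 E] {F f : 𝕜 → E} {a b : 𝕜}
    (hF : ContinuousOn F (segment ℝ a b)) (hf : ContinuousOn f (segment ℝ a b))
    (hderiv : ∀ z ∈ openSegment ℝ a b, HasDerivAt F (f z) z) :
    (b - a) • ∫ t in (0 : ℝ)..1, f (AffineMap.lineMap a b t) = F b - F a := by
  have hmaps : Set.MapsTo (AffineMap.lineMap a b : ℝ → 𝕜) (Set.Icc 0 1) (segment ℝ a b) :=
    fun t ht ↦ segment_eq_image_lineMap ℝ a b ▸ Set.mem_image_of_mem _ ht
  have hcont : Continuous (AffineMap.lineMap a b : ℝ → 𝕜) := AffineMap.lineMap_continuous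
  have hint := ((hf.comp hcont.continuousOn hmaps).const_smul (b - a)).intervalIntegrable_of_Icc
    (μ := MeasureTheory.volume) zero_le_one
  have h := intervalIntegral.integral_eq_sub_of_hasDerivAt_of_le zero_le_one
    (hF.comp hcont.continuousOn hmaps) (fun t ht ↦
      (hderiv _ (lineMap_mem_openSegment ℝ a b ht)).scomp t AffineMap.hasDerivAt_lineMap) hint
  simpa [intervalIntegral.integral_smul] using h

theorem summable_one_div_succ_sq : Summable fun n : ℕ ↦ 1 / ((n : ℝ) + 1) ^ 2 := by
  simpa using (summable_nat_add_iff 1).2 hasSum_zeta_two.summable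

theorem norm_dilog_term_le {w : ℂ} (hw : ‖w‖ ≤ 1) (n : ℕ) :
    ‖w ^ (n + 1) / ((n : ℂ) + 1) ^ 2‖ ≤ 1 / ((n : ℝ) + 1) ^ 2 := by
  have hnorm : ‖(n : ℂ) + 1‖ = (n : ℝ) + 1 := mod_cast Complex.norm_natCast (n + 1)
  rw [norm_div, norm_pow, norm_pow, hnorm]
  gcongr
  exact pow_le_one₀ (norm_nonneg w) hw

theorem hasSum_dilog {w : ℂ} (hw : ‖w‖ ≤ 1) :
    HasSum (fun n : ℕ ↦ w ^ (n + 1) / ((n : ℂ) + 1) ^ 2) (dilog w) :=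
  (summable_one_div_succ_sq.of_norm_bounded (norm_dilog_term_le hw)).hasSum

theorem continuousOn_dilog : ContinuousOn dilog (Metric.closedBall 0 1) :=
  continuousOn_tsum (fun n ↦ by fun_prop) summable_one_div_succ_sq fun n _ hw ↦
    norm_dilog_term_le (mem_closedBall_zero_iff.1 hw) n

theorem hasDerivAt_dilog {w : ℂ} (hw : ‖w‖ < 1) (hw0 : w ≠ 0) :
    HasDerivAt dilog (-Complex.log (1 - w) / w) w := by
  have hmem : w ∈ Metric.ball (0 : ℂ) 1 := mem_ball_zero_iff.2 hw
  have hdiff (n : ℕ) : DifferentiableOn ℂ (fun w : ℂ ↦ w ^ (n + 1) / ((n : ℂ) + 1) ^ 2)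
      (Metric.ball 0 1) := by fun_prop
  have hle (n : ℕ) (z : ℂ) (hz : z ∈ Metric.ball (0 : ℂ) 1) :
      ‖z ^ (n + 1) / ((n : ℂ) + 1) ^ 2‖ ≤ 1 / ((n : ℝ) + 1) ^ 2 :=
    norm_dilog_term_le (mem_ball_zero_iff.1 hz).le n
  have hterm (n : ℕ) :
      deriv (fun w : ℂ ↦ w ^ (n + 1) / ((n : ℂ) + 1) ^ 2) w = w ^ (n + 1) / (n + 1) / w := by
    have hn : (n : ℂ) + 1 ≠ 0 := Nat.cast_add_one_ne_zero n
    simp only [deriv_div_const, deriv_pow_field, Nat.cast_add, Nat.cast_one, Nat.add_sub_cancel]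
    field_simp
    rw [pow_succ]
  have hderiv : deriv dilog w = -Complex.log (1 - w) / w :=
    (Complex.hasSum_deriv_of_summable_norm summable_one_div_succ_sq hdiff
      Metric.isOpen_ball hle hmem).unique
      (((Complex.hasSum_taylorSeries_neg_log' hw).div_const w).congr_fun hterm)
  have hdilog : DifferentiableAt ℂ dilog w :=
    (Complex.differentiableOn_tsum_of_summable_norm summable_one_div_succ_sq hdiff
      Metric.isOpen_ball hle).differentiableAt (Metric.isOpen_ball.mem_nhds hmem)
  exact hderiv ▸ hdilog.hasDerivAt

theorem dilog_add_dilog_neg {w : ℂ} (hw : ‖w‖ ≤ 1) :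
    dilog w + dilog (-w) = dilog (w ^ 2) / 2 := by
  have hsum := (hasSum_dilog hw).add (hasSum_dilog (w := -w) (by rwa [norm_neg]))
  have hsq := (hasSum_dilog (w := w ^ 2) (by
    rw [norm_pow]; exact pow_le_one₀ (norm_nonneg w) hw)).div_const 2
  have heven (k : ℕ) : w ^ (2 * k + 1) / (((2 * k : ℕ) : ℂ) + 1) ^ 2
      + (-w) ^ (2 * k + 1) / (((2 * k : ℕ) : ℂ) + 1) ^ 2 = 0 := by
    rw [Odd.neg_pow ⟨k, rfl⟩, neg_div, add_neg_cancel]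
  have hodd (k : ℕ) : w ^ (2 * k + 1 + 1) / (((2 * k + 1 : ℕ) : ℂ) + 1) ^ 2
      + (-w) ^ (2 * k + 1 + 1) / (((2 * k + 1 : ℕ) : ℂ) + 1) ^ 2
      = (w ^ 2) ^ (k + 1) / ((k : ℂ) + 1) ^ 2 / 2 := by
    have hk : (k : ℂ) + 1 ≠ 0 := Nat.cast_add_one_ne_zero k
    rw [show 2 * k + 1 + 1 = 2 * (k + 1) by ring, Even.neg_pow ⟨k + 1, by ring⟩, pow_mul,
      show ((2 * k + 1 : ℕ) : ℂ) + 1 = 2 * (k + 1) by push_cast; ring]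
    field_simp
    norm_num
  refine hsum.unique ?_
  rw [← zero_add (dilog (w ^ 2) / 2)]
  exact HasSum.even_add_odd (hasSum_zero.congr_fun heven) (hsq.congr_fun hodd)

theorem dilog_one : dilog 1 = (π : ℂ) ^ 2 / 6 := by
  have hzeta : HasSum (fun n : ℕ ↦ 1 / ((n : ℝ) + 1) ^ 2) (π ^ 2 / 6) := by
    simpa using (hasSum_nat_add_iff' 1).2 hasSum_zeta_two
  refine (hasSum_dilog norm_one.le).unique ?_
  simpa using Complex.hasSum_ofReal.2 hzeta

theorem dilog_neg_one : dilog (-1) = -(π : ℂ) ^ 2 / 12 := by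
  have h := dilog_add_dilog_neg norm_one.le
  rw [one_pow, dilog_one] at h
  linear_combination h

theorem tan_pi_eq_exp_ratio (z : ℂ) :
    Complex.tan (π * z) =
      I * (1 - Complex.exp (2 * π * I * z)) / (1 + Complex.exp (2 * π * I * z)) := by
  rw [← Complex.cot_inv_eq_tan, Complex.cot_pi_eq_exp_ratio, inv_div, add_comm 1]

theorem norm_exp_two_pi_I_mul_le_one {z : ℂ} (hz : 0 ≤ z.im) :
    ‖Complex.exp (2 * π * I * z)‖ ≤ 1 := by
  have hre : (2 * π * I * z).re = -(2 * π * z.im) := by simp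
  rw [Complex.norm_exp, Real.exp_le_one_iff, hre, neg_nonpos]
  positivity

theorem one_add_mem_slitPlane_of_norm_le_one {q : ℂ} (hq : ‖q‖ ≤ 1) (hne : 1 + q ≠ 0) :
    1 + q ∈ slitPlane := by
  have hre : 0 ≤ (1 + q).re := by
    rw [add_re, one_re]
    linarith [neg_le_of_abs_le ((abs_re_le_norm q).trans hq)]
  exact mem_slitPlane_iff.2 (hre.lt_or_eq.imp_right fun h0 him ↦ hne (Complex.ext h0.symm him))

theorem one_add_exp_mem_slitPlane {z : ℂ} (hz : 0 < z.im) :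
    1 + Complex.exp (2 * π * I * z) ∈ slitPlane :=
  mem_slitPlane_of_norm_lt_one (UpperHalfPlane.norm_exp_two_pi_I_lt_one ⟨z, hz⟩)

theorem hasDerivAt_exp_two_pi_I_mul (z : ℂ) :
    HasDerivAt (fun z : ℂ ↦ Complex.exp (2 * π * I * z))
      (Complex.exp (2 * π * I * z) * (2 * π * I)) z :=
  (hasDerivAt_const_mul (2 * π * I)).cexp

theorem hasDerivAt_dilog_neg_exp {z : ℂ} (hz : 0 < z.im) :
    HasDerivAt (fun z : ℂ ↦ dilog (-Complex.exp (2 * π * I * z)))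
      (-(2 * π * I) * Complex.log (1 + Complex.exp (2 * π * I * z))) z := by
  have hq : ‖-Complex.exp (2 * π * I * z)‖ < 1 := by
    rw [norm_neg]; exact UpperHalfPlane.norm_exp_two_pi_I_lt_one ⟨z, hz⟩
  have hq0 : Complex.exp (2 * π * I * z) ≠ 0 := Complex.exp_ne_zero _
  refine ((hasDerivAt_dilog hq (neg_ne_zero.2 hq0)).comp z
    (hasDerivAt_exp_two_pi_I_mul z).neg).congr_deriv ?_
  rw [sub_neg_eq_add]
  field_simp

/-- A primitive of `z * tan (π * z)` on the upper half-plane, normalised to vanish at `0`. -/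
noncomputable def mulTanPrimitive (z : ℂ) : ℂ :=
  I * z ^ 2 / 2 - (z / (π : ℂ)) * Complex.log (1 + Complex.exp (2 * π * I * z))
    + (I / (2 * (π : ℂ) ^ 2)) * dilog (-Complex.exp (2 * π * I * z)) + I / 24

/-- The closed upper half-plane without the poles of `tan (π * z)`, encoded as the zeros of
`1 + exp (2πiz)`. The condition `0 ≤ z.im` keeps `-exp (2πiz)` in the closed unit disc, where the
series `dilog` is continuous, so `mulTanPrimitive` is continuous on this set. -/
def mulTanDomain : Set ℂ := {z | 0 ≤ z.im ∧ 1 + Complex.exp (2 * π * I * z) ≠ 0}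

theorem zero_mem_mulTanDomain : 0 ∈ mulTanDomain := by
  simp [mulTanDomain, one_add_one_eq_two]

theorem mem_mulTanDomain_of_im_pos {z : ℂ} (hz : 0 < z.im) : z ∈ mulTanDomain :=
  ⟨hz.le, slitPlane_ne_zero (one_add_exp_mem_slitPlane hz)⟩

theorem continuousOn_mul_tan : ContinuousOn (fun z : ℂ ↦ z * Complex.tan (π * z)) mulTanDomain := by
  simp only [tan_pi_eq_exp_ratio]
  exact continuousOn_id.mul (ContinuousOn.div (by fun_prop) (by fun_prop) fun z hz ↦ hz.2)

theorem continuousOn_mulTanPrimitive : ContinuousOn mulTanPrimitive mulTanDomain := by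
  have hlog : ContinuousOn (fun z : ℂ ↦ Complex.log (1 + Complex.exp (2 * π * I * z)))
      mulTanDomain :=
    ContinuousOn.clog (by fun_prop) fun z hz ↦
      one_add_mem_slitPlane_of_norm_le_one (norm_exp_two_pi_I_mul_le_one hz.1) hz.2
  have hdilog : ContinuousOn (fun z : ℂ ↦ dilog (-Complex.exp (2 * π * I * z))) mulTanDomain :=
    continuousOn_dilog.comp (by fun_prop) fun z hz ↦ by
      simpa using norm_exp_two_pi_I_mul_le_one hz.1
  unfold mulTanPrimitive
  fun_prop

theorem mulTanPrimitive_zero : mulTanPrimitive 0 = 0 := by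
  have hpi : (π : ℂ) ≠ 0 := ofReal_ne_zero.2 Real.pi_ne_zero
  simp only [mulTanPrimitive, mul_zero, Complex.exp_zero, dilog_neg_one]
  field_simp
  ring

theorem hasDerivAt_mulTanPrimitive {z : ℂ} (hz : 0 < z.im) :
    HasDerivAt mulTanPrimitive (z * Complex.tan (π * z)) z := by
  have hpi : (π : ℂ) ≠ 0 := ofReal_ne_zero.2 Real.pi_ne_zero
  have hslit := one_add_exp_mem_slitPlane hz
  have hne := slitPlane_ne_zero hslit
  have hsq : HasDerivAt (fun z : ℂ ↦ I * z ^ 2 / 2) (I * z) z :=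
    ((((hasDerivAt_id z).pow 2).const_mul I).div_const 2).congr_deriv (by
      rw [id, pow_one, mul_one, Nat.cast_ofNat]; ring)
  have hlog := ((hasDerivAt_id z).div_const (π : ℂ)).mul
    (((hasDerivAt_exp_two_pi_I_mul z).const_add 1).clog hslit)
  have hdilog : HasDerivAt
      (fun z : ℂ ↦ (I / (2 * (π : ℂ) ^ 2)) * dilog (-Complex.exp (2 * π * I * z)))
      (Complex.log (1 + Complex.exp (2 * π * I * z)) / π) z := by
    refine ((hasDerivAt_dilog_neg_exp hz).const_mul _).congr_deriv ?_
    field_simp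
    simp
  refine (((hsq.sub hlog).add hdilog).add_const (I / 24)).congr_deriv ?_
  rw [tan_pi_eq_exp_ratio, id]
  generalize Complex.exp (2 * π * I * z) = q at hne ⊢
  field_simp
  ring

theorem integral_mul_tan_lineMap {a b : ℂ} (hseg : segment ℝ a b ⊆ mulTanDomain)
    (hopen : ∀ z ∈ openSegment ℝ a b, 0 < z.im) :
    (b - a) * ∫ t in (0 : ℝ)..1,
        AffineMap.lineMap a b t * Complex.tan (π * AffineMap.lineMap a b t) =
      mulTanPrimitive b - mulTanPrimitive a :=
  integral_comp_lineMap_eq_sub_of_hasDerivAt (continuousOn_mulTanPrimitive.mono hseg)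
    (continuousOn_mul_tan.mono hseg) fun z hz ↦ hasDerivAt_mulTanPrimitive (hopen z hz)

theorem stmt_7 (s : ℂ) (hs : 0 < s.im) :
    (∫ u in (0:ℝ)..1, s ^ 2 * (u : ℂ) * Complex.tan (Real.pi * s * u)) =
      Complex.I * s ^ 2 / 2
        - (s / (Real.pi : ℂ)) * Complex.log (1 + Complex.exp (2 * Real.pi * Complex.I * s))
        + (Complex.I / (2 * (Real.pi : ℂ) ^ 2)) * dilog (-Complex.exp (2 * Real.pi * Complex.I * s))
        + Complex.I / 24 := by
  have hopen : ∀ z ∈ openSegment ℝ 0 s, 0 < z.im := by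
    rintro _ ⟨x, y, -, hy, -, rfl⟩
    simpa using mul_pos hy hs
  have hseg : segment ℝ 0 s ⊆ mulTanDomain := by
    rw [← insert_endpoints_openSegment]
    rintro z (rfl | rfl | hz)
    exacts [zero_mem_mulTanDomain, mem_mulTanDomain_of_im_pos hs,
      mem_mulTanDomain_of_im_pos (hopen z hz)]
  calc ∫ u in (0:ℝ)..1, s ^ 2 * (u : ℂ) * Complex.tan (π * s * u)
    _ = (s - 0) * ∫ u in (0:ℝ)..1,
          AffineMap.lineMap 0 s u * Complex.tan (π * AffineMap.lineMap 0 s u) := by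
      rw [← intervalIntegral.integral_const_mul]
      congr with u
      rw [AffineMap.lineMap_apply_module', sub_zero, add_zero, real_smul, mul_comm (u : ℂ) s]
      ring_nf
    _ = mulTanPrimitive s - mulTanPrimitive 0 := integral_mul_tan_lineMap hseg hopen
    _ = mulTanPrimitive s := by rw [mulTanPrimitive_zero, sub_zero]
    _ = _ := rfl
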